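/- Let d be an even positive integer, let 0 < ε ≤ 1/8, and let N be a positive integer. Let Θ be the diagonal d×d matrix with k-th diagonal entry (−1)^k (k = 1, …, d) and ρ0 = (I_d + 8εΘ)/d. Draw U_1, …, U_N independently according to the Haar probability measure on U(d). Then the probability of the event (1/N²) Σ_{i=1}^N Σ_{j=1}^N Re Tr[Θ U_iᴴ U_j ρ0 U_jᴴ U_i] > 3ε is at most 8/(3N). -/

import Mathlib

open Matrix Finset MeasureTheory
open scoped ComplexOrder

/-- The diagonal matrix `Θ` whose `k`-th diagonal entry is `(−1)^k`, `k = 1, …, d`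
(index `k : Fin d` corresponds to the `(k+1)`-st entry). -/
noncomputable def Theta (d : ℕ) : Matrix (Fin d) (Fin d) ℂ :=
  Matrix.diagonal fun k => (-1 : ℂ) ^ ((k : ℕ) + 1)

/-- The state `ρ0 = (I_d + 8 ε Θ)/d`. -/
noncomputable def rho0 (d : ℕ) (ε : ℝ) : Matrix (Fin d) (Fin d) ℂ :=
  ((d : ℂ))⁻¹ • (1 + ((8 * ε : ℝ) : ℂ) • Theta d)

lemma aux_theta_H (d : ℕ) : (Theta d)ᴴ = Theta d := by
  simp only [Theta, Matrix.diagonal_conjTranspose]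
  congr 1
  ext k
  simp

lemma aux_theta_sq (d : ℕ) : Theta d * Theta d = 1 := by
  rw [Theta, Matrix.diagonal_mul_diagonal, ← Matrix.diagonal_one]
  congr 1
  ext k
  rw [← mul_pow]
  simp

lemma aux_rev (d : ℕ) (hd : Even d) :
    (Theta d).submatrix Fin.rev Fin.rev = - Theta d := by
  rw [Theta, Matrix.submatrix_diagonal _ _ Fin.rev_injective, Matrix.diagonal_neg]
  congr 1
  ext k
  simp only [Function.comp, Fin.val_rev]
  have hk := k.2
  rcases Nat.even_or_odd (k : ℕ) with h | h
  · have h1 : Odd ((k : ℕ) + 1) := h.add_one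
    have h2 : Even (d - (k + 1) + 1) := by
      have e : d - (k + 1) + 1 = d - k := by omega
      rw [e, Nat.even_sub hk.le]; tauto
    rw [h1.neg_one_pow, h2.neg_one_pow]; simp
  · have h1 : Even ((k : ℕ) + 1) := h.add_one
    have h2 : Odd (d - (k + 1) + 1) := by
      have e : d - (k + 1) + 1 = d - k := by omega
      rw [← Nat.not_even_iff_odd] at h
      rw [e, ← Nat.not_even_iff_odd, Nat.even_sub hk.le]; tauto
    rw [h1.neg_one_pow, h2.neg_one_pow]

lemma aux_trace (d : ℕ) (hd : Even d) : (Theta d).trace = 0 := by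
  have h : ((Theta d).submatrix Fin.rev Fin.rev).trace = (Theta d).trace := by
    simp only [Matrix.trace, Matrix.diag_apply, Matrix.submatrix_apply]
    exact Equiv.sum_comp Fin.revPerm (fun i => Theta d i i)
  rw [aux_rev d hd, Matrix.trace_neg] at h
  exact self_eq_neg.mp h.symm

lemma aux_exists (d : ℕ) (hd : Even d) : ∃ P : Matrix.unitaryGroup (Fin d) ℂ,
    (P : Matrix (Fin d) (Fin d) ℂ) * Theta d * (P : Matrix (Fin d) (Fin d) ℂ)ᴴ = - Theta d := by
  have hP : ((1 : Matrix (Fin d) (Fin d) ℂ).submatrix Fin.rev id) ∈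
      Matrix.unitaryGroup (Fin d) ℂ := by
    rw [Matrix.mem_unitaryGroup_iff, Matrix.star_eq_conjTranspose, Matrix.conjTranspose_submatrix,
      Matrix.conjTranspose_one, ← Matrix.submatrix_mul _ _ _ _ _ Function.bijective_id, one_mul,
      Matrix.submatrix_one _ Fin.rev_injective]
  refine ⟨⟨_, hP⟩, ?_⟩
  have : Theta d = (Theta d).submatrix id id := by simp
  show (1 : Matrix (Fin d) (Fin d) ℂ).submatrix Fin.rev id * Theta d *
    ((1 : Matrix (Fin d) (Fin d) ℂ).submatrix Fin.rev id)ᴴ = _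
  rw [← aux_rev d hd, Matrix.conjTranspose_submatrix,
      Matrix.conjTranspose_one]
  conv_lhs => rw [this]
  rw [← Matrix.submatrix_mul _ _ _ _ _ Function.bijective_id,
    ← Matrix.submatrix_mul _ _ _ _ _ Function.bijective_id, one_mul, mul_one]

lemma aux_compact (d : ℕ) : CompactSpace (Matrix.unitaryGroup (Fin d) ℂ) := by
  refine isCompact_iff_compactSpace (s := ((Matrix.unitaryGroup (Fin d) ℂ : Submonoid _) :
    Set (Matrix (Fin d) (Fin d) ℂ))).mp ?_
  have hK : IsCompact (Set.univ.pi fun _ : Fin d => Set.univ.pi fun _ : Fin d =>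
      Metric.closedBall (0 : ℂ) 1) :=
    isCompact_univ_pi fun _ => isCompact_univ_pi fun _ => isCompact_closedBall _ _
  refine IsCompact.of_isClosed_subset (X := Matrix (Fin d) (Fin d) ℂ) hK ?_ ?_
  · have : ((Matrix.unitaryGroup (Fin d) ℂ : Submonoid _) : Set (Matrix (Fin d) (Fin d) ℂ)) =
        {A | A * star A = 1} := by
      ext A; exact Matrix.mem_unitaryGroup_iff
    rw [this]
    exact isClosed_eq (by fun_prop) continuous_const
  · intro A hA i _ j _
    simpa using entry_norm_bound_of_unitary hA i j

lemma aux_second (d : ℕ) : SecondCountableTopology (Matrix.unitaryGroup (Fin d) ℂ) := by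
  have : SecondCountableTopology (Matrix (Fin d) (Fin d) ℂ) :=
    inferInstanceAs (SecondCountableTopology (Fin d → Fin d → ℂ))
  exact TopologicalSpace.Subtype.secondCountableTopology
    ((Matrix.unitaryGroup (Fin d) ℂ : Submonoid _) : Set (Matrix (Fin d) (Fin d) ℂ))

lemma aux_right {G : Type*} [Group G] [TopologicalSpace G] [IsTopologicalGroup G]
    [CompactSpace G] [MeasurableSpace G] [BorelSpace G] (μ : Measure G)
    [μ.IsHaarMeasure] [IsProbabilityMeasure μ] : μ.IsMulRightInvariant := by
  refine ⟨fun g => ?_⟩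
  have : IsProbabilityMeasure (Measure.map (· * g) μ) :=
    Measure.isProbabilityMeasure_map (measurable_mul_const g).aemeasurable
  have : (Measure.map (· * g) μ).IsHaarMeasure := inferInstance
  exact Measure.isHaarMeasure_eq_of_isProbabilityMeasure _ _

/-- The real overlap of two rotated copies of `Θ`. -/
noncomputable def auxF (d : ℕ) (V W : Matrix.unitaryGroup (Fin d) ℂ) : ℝ :=
  (((V : Matrix (Fin d) (Fin d) ℂ) * Theta d * (V : Matrix (Fin d) (Fin d) ℂ)ᴴ) *
    ((W : Matrix (Fin d) (Fin d) ℂ) * Theta d * (W : Matrix (Fin d) (Fin d) ℂ)ᴴ)).trace.re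

lemma aux_term (d : ℕ) (hd : Even d) (ε : ℝ) (V W : Matrix.unitaryGroup (Fin d) ℂ) :
    ((Theta d * (V : Matrix (Fin d) (Fin d) ℂ)ᴴ *
              (W : Matrix (Fin d) (Fin d) ℂ) * rho0 d ε *
              (W : Matrix (Fin d) (Fin d) ℂ)ᴴ * (V : Matrix (Fin d) (Fin d) ℂ)).trace).re
      = 8 * ε / d * auxF d V W := by
  have hV : (V : Matrix (Fin d) (Fin d) ℂ)ᴴ * V = 1 := Matrix.mem_unitaryGroup_iff'.mp V.2
  have hW : (W : Matrix (Fin d) (Fin d) ℂ) * (W : Matrix (Fin d) (Fin d) ℂ)ᴴ = 1 :=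
    Matrix.mem_unitaryGroup_iff.mp W.2
  rw [auxF]
  generalize (V : Matrix (Fin d) (Fin d) ℂ) = A at *
  generalize (W : Matrix (Fin d) (Fin d) ℂ) = B at *
  have h1 : Theta d * Aᴴ * B * rho0 d ε * Bᴴ * A = (d : ℂ)⁻¹ • (Theta d +
      ((8 * ε : ℝ) : ℂ) • (Theta d * Aᴴ * (B * Theta d * Bᴴ) * A)) := by
    rw [rho0]
    simp only [Matrix.mul_smul, Matrix.smul_mul, Matrix.mul_add, Matrix.add_mul, Matrix.mul_one]
    congr 2
    · rw [mul_assoc (_ * _) B, hW, mul_one, mul_assoc, hV, mul_one]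
    · simp only [mul_assoc]
  have h2 : (Theta d * Aᴴ * (B * Theta d * Bᴴ) * A).trace =
      (A * Theta d * Aᴴ * (B * Theta d * Bᴴ)).trace := by
    rw [Matrix.trace_mul_comm]
    simp only [mul_assoc]
  rw [h1, Matrix.trace_smul, Matrix.trace_add, aux_trace d hd, zero_add, Matrix.trace_smul, h2,
    smul_eq_mul, smul_eq_mul, ← mul_assoc]
  have : ((d : ℂ)⁻¹ * ((8 * ε : ℝ) : ℂ)) = ((8 * ε / d : ℝ) : ℂ) := by
    push_cast; ring
  rw [this, Complex.re_ofReal_mul]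

lemma aux_self (d : ℕ) (V : Matrix.unitaryGroup (Fin d) ℂ) : auxF d V V = d := by
  have hV : (V : Matrix (Fin d) (Fin d) ℂ)ᴴ * V = 1 := Matrix.mem_unitaryGroup_iff'.mp V.2
  have hV' : (V : Matrix (Fin d) (Fin d) ℂ) * (V : Matrix (Fin d) (Fin d) ℂ)ᴴ = 1 :=
    Matrix.mem_unitaryGroup_iff.mp V.2
  rw [auxF]
  generalize (V : Matrix (Fin d) (Fin d) ℂ) = A at *
  have : A * Theta d * Aᴴ * (A * Theta d * Aᴴ) = 1 := by
    calc _ = A * Theta d * (Aᴴ * A) * Theta d * Aᴴ := by simp only [mul_assoc]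
      _ = A * (Theta d * Theta d) * Aᴴ := by rw [hV, mul_one]; simp only [mul_assoc]
      _ = 1 := by rw [aux_theta_sq, mul_one, hV']
  rw [this]
  simp

lemma aux_nonneg (d N : ℕ) (U : Fin N → Matrix.unitaryGroup (Fin d) ℂ) :
    0 ≤ ∑ i, ∑ j, auxF d (U i) (U j) := by
  set S : Matrix (Fin d) (Fin d) ℂ := ∑ i, (U i : Matrix (Fin d) (Fin d) ℂ) * Theta d *
    (U i : Matrix (Fin d) (Fin d) ℂ)ᴴ with hS
  have hSH : Sᴴ = S := by
    rw [hS, Matrix.conjTranspose_sum]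
    refine Finset.sum_congr rfl fun i _ => ?_
    simp only [Matrix.conjTranspose_mul, Matrix.conjTranspose_conjTranspose, aux_theta_H, mul_assoc]
  have h : ∑ i, ∑ j, auxF d (U i) (U j) = (S * Sᴴ).trace.re := by
    rw [hSH, hS]
    simp only [auxF, Finset.sum_mul_sum, Matrix.trace_sum, Complex.re_sum]
  rw [h]
  exact (Complex.le_def.mp (Matrix.posSemidef_self_mul_conjTranspose S).trace_nonneg).1

lemma aux_flip (d : ℕ) (P V W : Matrix.unitaryGroup (Fin d) ℂ)
    (hP : (P : Matrix (Fin d) (Fin d) ℂ) * Theta d * (P : Matrix (Fin d) (Fin d) ℂ)ᴴ = - Theta d) :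
    auxF d V (W * P) = - auxF d V W := by
  have : ((W * P : Matrix.unitaryGroup (Fin d) ℂ) : Matrix (Fin d) (Fin d) ℂ) * Theta d *
      ((W * P : Matrix.unitaryGroup (Fin d) ℂ) : Matrix (Fin d) (Fin d) ℂ)ᴴ =
      - ((W : Matrix (Fin d) (Fin d) ℂ) * Theta d * (W : Matrix (Fin d) (Fin d) ℂ)ᴴ) := by
    calc _ = (W : Matrix (Fin d) (Fin d) ℂ) * ((P : Matrix (Fin d) (Fin d) ℂ) * Theta d *
          (P : Matrix (Fin d) (Fin d) ℂ)ᴴ) * (W : Matrix (Fin d) (Fin d) ℂ)ᴴ := by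
            simp [Matrix.conjTranspose_mul, mul_assoc]
      _ = _ := by rw [hP]; simp
  rw [auxF, this, auxF]
  simp

/-- For `U₁, …, U_N` i.i.d. Haar unitaries, the probability that
`(1/N²) Σᵢⱼ Re Tr[Θ Uᵢᴴ Uⱼ ρ0 Uⱼᴴ Uᵢ] > 3ε` is at most `8/(3N)`. -/
theorem prob_cross_term_large (d N : ℕ) (hd : 0 < d) (hdeven : Even d) (hN : 0 < N)
    (ε : ℝ) (hε : 0 < ε) (hε8 : ε ≤ 1 / 8)
    [MeasurableSpace (Matrix.unitaryGroup (Fin d) ℂ)]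
    [BorelSpace (Matrix.unitaryGroup (Fin d) ℂ)]
    (μ : Measure (Matrix.unitaryGroup (Fin d) ℂ))
    [μ.IsHaarMeasure] [IsProbabilityMeasure μ] :
    (Measure.pi fun _ : Fin N => μ)
        {U : Fin N → Matrix.unitaryGroup (Fin d) ℂ |
          3 * ε < ((N : ℝ) ^ 2)⁻¹ *
            ∑ i, ∑ j, ((Theta d * (U i : Matrix (Fin d) (Fin d) ℂ)ᴴ *
              (U j : Matrix (Fin d) (Fin d) ℂ) * rho0 d ε *
              (U j : Matrix (Fin d) (Fin d) ℂ)ᴴ * (U i : Matrix (Fin d) (Fin d) ℂ)).trace).re}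
      ≤ 8 / (3 * (N : ENNReal)) := by
  have := aux_compact d
  have := aux_second d
  have := aux_right μ
  obtain ⟨P, hP⟩ := aux_exists d hdeven
  have hcont : ∀ i j : Fin N, Continuous fun U : Fin N → Matrix.unitaryGroup (Fin d) ℂ =>
      auxF d (U i) (U j) := by
    intro i j
    unfold auxF
    have hc : ∀ i : Fin N, Continuous fun U : Fin N → Matrix.unitaryGroup (Fin d) ℂ =>
      (U i : Matrix (Fin d) (Fin d) ℂ) := fun i => continuous_subtype_val.comp (continuous_apply i)
    have hi := hc i
    have hj := hc j
    refine Complex.continuous_re.comp (Continuous.matrix_trace ?_)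
    exact ((hi.mul continuous_const).mul hi.matrix_conjTranspose).mul
      ((hj.mul continuous_const).mul hj.matrix_conjTranspose)
  have hint : ∀ i j : Fin N, Integrable (fun U : Fin N → Matrix.unitaryGroup (Fin d) ℂ =>
      auxF d (U i) (U j)) (Measure.pi fun _ : Fin N => μ) := fun i j =>
    (hcont i j).integrable_of_hasCompactSupport (HasCompactSupport.of_compactSpace _)
  have hval : ∀ i j : Fin N, ∫ U : Fin N → Matrix.unitaryGroup (Fin d) ℂ,
      auxF d (U i) (U j) ∂(Measure.pi fun _ : Fin N => μ) = if i = j then (d : ℝ) else 0 := by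
    intro i j
    split_ifs with h
    · subst h
      simp [aux_self]
    · refine integral_eq_zero_of_mul_right_eq_neg (g := Pi.mulSingle j P) fun U => ?_
      simp only [Pi.mul_apply, Pi.mulSingle_eq_same, Pi.mulSingle_eq_of_ne h, mul_one]
      exact aux_flip d P _ _ hP
  set T : (Fin N → Matrix.unitaryGroup (Fin d) ℂ) → ℝ := fun U => ∑ i, ∑ j, auxF d (U i) (U j)
    with hT
  have hTint : Integrable T (Measure.pi fun _ : Fin N => μ) :=
    integrable_finsetSum _ fun i _ => integrable_finsetSum _ fun j _ => hint i j
  have hTval : ∫ U, T U ∂(Measure.pi fun _ : Fin N => μ) = N * d := by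
    rw [hT, integral_finsetSum _ fun i _ => integrable_finsetSum _ fun j _ => hint i j]
    simp_rw [integral_finsetSum _ fun j _ => hint _ j, hval]
    simp
  have hmk := mul_meas_ge_le_integral_of_nonneg (μ := Measure.pi fun _ : Fin N => μ)
    (Filter.Eventually.of_forall (aux_nonneg d N)) hTint (3 * d * N ^ 2 / 8)
  rw [hTval] at hmk
  have hd' : (0 : ℝ) < d := by exact_mod_cast hd
  have hN' : (0 : ℝ) < N := by exact_mod_cast hN
  have hreal : (Measure.pi fun _ : Fin N => μ).real {x | (3 * d * N ^ 2 / 8 : ℝ) ≤ T x} ≤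
      8 / (3 * N) := by
    rw [le_div_iff₀ (by positivity)]
    refine le_of_mul_le_mul_left ?_ (show (0 : ℝ) < d * N / 8 by positivity)
    calc _ = 3 * d * N ^ 2 / 8 *
          (Measure.pi fun _ : Fin N => μ).real {x | (3 * d * N ^ 2 / 8 : ℝ) ≤ T x} := by ring
      _ ≤ N * d := hmk
      _ = _ := by ring
  have hfin : (8 / (3 * (N : ENNReal))) = ENNReal.ofReal (8 / (3 * N)) := by
    rw [ENNReal.ofReal_div_of_pos (by positivity), ENNReal.ofReal_mul (by norm_num)]
    simp
  rw [hfin]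
  refine le_trans (measure_mono ?_) (ENNReal.le_ofReal_iff_toReal_le (measure_ne_top _ _)
    (by positivity) |>.mpr hreal)
  intro U hU
  simp only [Set.mem_setOf_eq, aux_term d hdeven] at hU ⊢
  simp_rw [← Finset.mul_sum] at hU
  change 3 * ε < ((N : ℝ) ^ 2)⁻¹ * (8 * ε / d * T U) at hU
  have e : ((N : ℝ) ^ 2)⁻¹ * (8 * ε / d * T U) = (8 * ε * T U) / (N ^ 2 * d) := by
    field_simp
  rw [e, lt_div_iff₀ (by positivity)] at hU
  have : ε * (3 * (N ^ 2 * d)) < ε * (8 * T U) := by linarith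
  have := lt_of_mul_lt_mul_left this hε.le
  linarith
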